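/- Let 𝔽 be a field of characteristic zero and set d = 5. Define θ*_0 = 3, θ*_1 = 93/35, θ*_2 = 69/35, θ*_3 = 33/35, θ*_4 = −3/7, θ*_5 = −15/7; b_0 = 3, b_1 = 64/35, b_2 = 243/175, b_3 = 48/49, b_4 = 11/21; c_1 = 1, c_2 = 192/175, c_3 = 243/245, c_4 = 16/21, c_5 = 3/7; a_0 = 0, a_1 = 6/35, a_2 = 18/35, a_3 = 36/35, a_4 = 12/7, a_5 = 18/7. Then conditions (i)–(viii) of the second main theorem are satisfied with θ_i = θ*_i (0 ≤ i ≤ 5), β = 2, γ = γ* = −12/35, θ_{−1} = θ*_{−1} = 3, θ*_6 = −21/5, and a*_0 = 0; consequently the 6×6 irreducible tridiagonal matrix A over 𝔽 with diagonal entries a_0,…,a_5, superdiagonal entries b_0,…,b_4, and subdiagonal entries c_1,…,c_5, together with A* = diag(θ*_0,…,θ*_5), form a Leonard pair on 𝔽^{6}, with A multiplicity-free with eigenvalues θ*_0,…,θ*_5. -/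

import Mathlib

namespace LeonardPaper

variable {F : Type*} [Field F] {V : Type*} [AddCommGroup V] [Module F V]

/-- A square matrix is irreducible tridiagonal: entries vanish off the three central
diagonals, and all subdiagonal and superdiagonal entries are nonzero. -/
def IsIrredTridiag {n : ℕ} (M : Matrix (Fin n) (Fin n) F) : Prop :=
  (∀ i j : Fin n, ((i : ℕ) + 1 < (j : ℕ) ∨ (j : ℕ) + 1 < (i : ℕ)) → M i j = 0) ∧
  (∀ i j : Fin n, ((i : ℕ) + 1 = (j : ℕ) ∨ (j : ℕ) + 1 = (i : ℕ)) → M i j ≠ 0)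

/-- Leonard pair on `V` (of dimension `d+1`). -/
def IsLeonardPair (d : ℕ) (A As : Module.End F V) : Prop :=
  (∃ bas : Module.Basis (Fin (d + 1)) F V,
      IsIrredTridiag (LinearMap.toMatrix bas bas A) ∧ (LinearMap.toMatrix bas bas As).IsDiag) ∧
  (∃ bas : Module.Basis (Fin (d + 1)) F V,
      IsIrredTridiag (LinearMap.toMatrix bas bas As) ∧ (LinearMap.toMatrix bas bas A).IsDiag)

/-- A system of mutually orthogonal (rank-one) idempotents in `End(V)`. -/
def MOISys (d : ℕ) (E : Fin (d + 1) → Module.End F V) : Prop :=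
  (∀ i j, E i * E j = if i = j then E i else 0) ∧
  ∀ i, Module.finrank F (LinearMap.range (E i)) = 1

/-- `E` is the system of primitive idempotents of a multiplicity-free `A`,
with eigenvalue ordering `θ`. -/
def IdempSysOf (d : ℕ) (A : Module.End F V) (θ : Fin (d + 1) → F)
    (E : Fin (d + 1) → Module.End F V) : Prop :=
  MOISys d E ∧ (∑ i, E i) = 1 ∧ Function.Injective θ ∧ ∀ i, A * E i = θ i • E i

/-- Leonard system. -/
def IsLeonardSystem (d : ℕ) (A : Module.End F V) (E : Fin (d + 1) → Module.End F V)
    (As : Module.End F V) (Es : Fin (d + 1) → Module.End F V) : Prop :=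
  (∃ θ, IdempSysOf d A θ E) ∧ (∃ θs, IdempSysOf d As θs Es) ∧
  (∀ i j : Fin (d + 1), ((i : ℕ) + 1 < (j : ℕ) ∨ (j : ℕ) + 1 < (i : ℕ)) → Es i * A * Es j = 0) ∧
  (∀ i j : Fin (d + 1), ((i : ℕ) + 1 = (j : ℕ) ∨ (j : ℕ) + 1 = (i : ℕ)) → Es i * A * Es j ≠ 0) ∧
  (∀ i j : Fin (d + 1), ((i : ℕ) + 1 < (j : ℕ) ∨ (j : ℕ) + 1 < (i : ℕ)) → E i * As * E j = 0) ∧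
  (∀ i j : Fin (d + 1), ((i : ℕ) + 1 = (j : ℕ) ∨ (j : ℕ) + 1 = (i : ℕ)) → E i * As * E j ≠ 0)

/-- The tridiagonal matrix with diagonal `a`, superdiagonal `b`, subdiagonal `c`. -/
def triMat (d : ℕ) (a b c : ℕ → F) : Matrix (Fin (d + 1)) (Fin (d + 1)) F :=
  Matrix.of fun i j : Fin (d + 1) =>
    if (i : ℕ) = (j : ℕ) then a i
    else if (i : ℕ) + 1 = (j : ℕ) then b i
    else if (j : ℕ) + 1 = (i : ℕ) then c i
    else 0


/-- Conditions (i)–(viii) of the second main theorem (Theorem 4.1 of the paper).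
Here `θ` is the (extended) eigenvalue sequence (indices `-1, 0, …, d`), `θs` the
(extended) dual eigenvalue sequence (indices `-1, 0, …, d+1`), `a`, `b`, `c` the
candidate intersection numbers, and `Ω` the common value in condition (vii). -/
def Thm2Conds (d : ℕ) (θ θs : ℤ → F) (a b c : ℕ → F) (β γ γs astar0 Ω : F) : Prop :=
  -- (i)
  (∀ i j : ℤ, 0 ≤ i → i ≤ d → 0 ≤ j → j ≤ d → i ≠ j → θ i ≠ θ j) ∧
  -- (ii)
  (∀ i : ℤ, 1 ≤ i → i ≤ d → θs i ≠ θs 0) ∧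
  -- (iii), extended to i = 0 and i = d via θs (-1) and θs (d+1)
  (∀ i : ℤ, 0 ≤ i → i ≤ d → γs = θs (i - 1) - β * θs i + θs (i + 1)) ∧
  -- (iv)
  (∀ i : ℕ, 1 ≤ i → i ≤ d → b (i - 1) * c i ≠ 0) ∧
  -- (v)
  (b d = 0) ∧ (c 0 = 0) ∧
  (∀ i : ℕ, i ≤ d → c i + a i + b i = θ 0) ∧
  -- (vi)
  (∀ i : ℕ, i ≤ d →
    c i * (θs ((i : ℤ) - 1) - θs i) - b i * (θs i - θs ((i : ℤ) + 1))
      = (θ 1 - θ 0) * (θs i - astar0)) ∧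
  -- (vii)
  (∀ i : ℕ, 1 ≤ i → i ≤ d →
    c i * (θs ((i : ℤ) - 1) - θs ((i : ℤ) + 1)) - b (i - 1) * (θs ((i : ℤ) - 2) - θs i)
      - (θ 0 - θ (-1)) * (θs ((i : ℤ) - 1) + θs i) = Ω) ∧
  -- (viii)
  (γ = θ (-1) - β * θ 0 + θ 1) ∧
  (∀ i : ℤ, 1 ≤ i → i ≤ (d : ℤ) - 1 → θ (i - 1) - β * θ i + θ (i + 1) = γ)

theorem idemp_of_basis {d : ℕ} {F : Type*} [Field F] {V : Type*} [AddCommGroup V] [Module F V]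
    (bas : Module.Basis (Fin (d + 1)) F V) (A : Module.End F V) (t : Fin (d + 1) → F)
    (ht : Function.Injective t) (hA : ∀ i, A (bas i) = t i • bas i) :
    ∃ E : Fin (d + 1) → Module.End F V, IdempSysOf d A t E := by
  refine ⟨fun i => (bas.coord i).smulRight (bas i), ⟨?_, ?_⟩, ?_, ht, ?_⟩
  · intro i j
    apply bas.ext
    intro k
    by_cases hij : i = j
    · subst hij
      simp
    · by_cases hk : k = j
      · subst hk
        simp [hij]
      · simp [hij, hk]
  · intro i
    have : LinearMap.range ((bas.coord i).smulRight (bas i)) = Submodule.span F {bas i} := by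
      ext x
      rw [LinearMap.mem_range, Submodule.mem_span_singleton]
      constructor
      · rintro ⟨y, rfl⟩
        exact ⟨bas.coord i y, rfl⟩
      · rintro ⟨c, rfl⟩
        exact ⟨c • bas i, by simp⟩
    rw [this]
    exact finrank_span_singleton (bas.ne_zero i)
  · ext x
    simp [LinearMap.sum_apply, bas.sum_repr]
  · intro i
    ext x
    simp only [Module.End.mul_apply, LinearMap.smulRight_apply, LinearMap.smul_apply, map_smul, hA]
    exact smul_comm _ _ _

theorem leonard_of_matrix {d : ℕ} {F : Type*} [Field F]
    (A P Q : Matrix (Fin (d + 1)) (Fin (d + 1)) F) (t : Fin (d + 1) → F)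
    (ht : Function.Injective t) (hPQ : P * Q = 1)
    (hAP : A * P = P * Matrix.diagonal t) (hDP : Matrix.diagonal t * P = P * A)
    (hA : IsIrredTridiag A) :
    IsLeonardPair d (Matrix.toLin' A) (Matrix.toLin' (Matrix.diagonal t)) ∧
    ∃ E : Fin (d + 1) → Module.End F (Fin (d + 1) → F), IdempSysOf d (Matrix.toLin' A) t E := by
  have hQP : Q * P = 1 := mul_eq_one_comm.mp hPQ
  let bas : Module.Basis (Fin (d + 1)) F (Fin (d + 1) → F) :=
    (Pi.basisFun F (Fin (d + 1))).map (Matrix.toLin'OfInv hQP hPQ)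
  have hbas : ∀ j i, bas j i = P i j := by
    intro j i
    simp [bas, Matrix.toLin'OfInv]
  have key : ∀ M N : Matrix (Fin (d + 1)) (Fin (d + 1)) F, M * P = P * N →
      LinearMap.toMatrix bas bas (Matrix.toLin' M) = N := by
    intro M N h
    have : Matrix.toLin' M = Matrix.toLin bas bas N := by
      apply bas.ext
      intro j
      rw [Matrix.toLin_self]
      ext i
      have h2 := congrFun (congrFun h i) j
      simp only [Matrix.mul_apply] at h2
      simp only [Matrix.toLin'_apply, Matrix.mulVec, dotProduct, hbas, Finset.sum_apply,
        Pi.smul_apply, smul_eq_mul]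
      rw [h2]
      exact Finset.sum_congr rfl fun _ _ => mul_comm _ _
    rw [this, LinearMap.toMatrix_toLin]
  refine ⟨⟨⟨Pi.basisFun F _, ?_, ?_⟩, ⟨bas, ?_, ?_⟩⟩, ?_⟩
  · rw [← Matrix.toLin_eq_toLin', LinearMap.toMatrix_toLin]
    exact hA
  · rw [← Matrix.toLin_eq_toLin', LinearMap.toMatrix_toLin]
    exact Matrix.isDiag_diagonal t
  · rw [key _ _ hDP]
    exact hA
  · rw [key _ _ hAP]
    exact Matrix.isDiag_diagonal t
  · apply idemp_of_basis bas _ t ht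
    intro j
    ext i
    have h2 := congrFun (congrFun hAP i) j
    rw [Matrix.mul_diagonal, Matrix.mul_apply] at h2
    simp only [Matrix.toLin'_apply, Matrix.mulVec, dotProduct, hbas, Pi.smul_apply, smul_eq_mul]
    rw [h2, mul_comm]

/-- The transition matrix. -/
def transP (F : Type*) [Field F] : Matrix (Fin 6) (Fin 6) F :=
  !![1, 3, 5, 7, 9, 11;
     1, 93/35, 23/7, 11/5, -9/7, -55/7;
     1, 69/35, 1/2, -29/10, -9/2, 55/14;
     1, 33/35, -29/14, -79/30, 57/14, -55/42;
     1, -3/7, -5/2, 19/6, -3/2, 11/42;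
     1, -15/7, 25/14, -5/6, 3/14, -1/42]

theorem transP_sq {F : Type*} [Field F] [CharZero F] :
    transP F * ((1 / 36 : F) • transP F) = 1 := by
  ext i j
  fin_cases i <;> fin_cases j <;>
    simp [transP, Matrix.mul_apply, Fin.sum_univ_succ, -mul_eq_zero] <;> norm_num

/-- The explicit tridiagonal matrix. -/
def explA (F : Type*) [Field F] : Matrix (Fin 6) (Fin 6) F :=
  !![0, 3, 0, 0, 0, 0;
     1, 6/35, 64/35, 0, 0, 0;
     0, 192/175, 18/35, 243/175, 0, 0;
     0, 0, 243/245, 36/35, 48/49, 0;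
     0, 0, 0, 16/21, 12/7, 11/21;
     0, 0, 0, 0, 3/7, 18/7]

/-- The explicit eigenvalues. -/
def explT (F : Type*) [Field F] : Fin 6 → F :=
  ![3, 93/35, 69/35, 33/35, -3/7, -15/7]

theorem explA_mul {F : Type*} [Field F] [CharZero F] :
    explA F * transP F = transP F * Matrix.diagonal (explT F) := by
  ext i j
  rw [Matrix.mul_diagonal]
  fin_cases i <;> fin_cases j <;>
    simp [transP, explA, explT, Matrix.mul_apply, Fin.sum_univ_succ] <;> norm_num

theorem mul_explA {F : Type*} [Field F] [CharZero F] :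
    Matrix.diagonal (explT F) * transP F = transP F * explA F := by
  ext i j
  rw [Matrix.diagonal_mul]
  fin_cases i <;> fin_cases j <;>
    simp [transP, explA, explT, Matrix.mul_apply, Fin.sum_univ_succ] <;> norm_num

set_option maxHeartbeats 4000000 in
/-- Proposition 5.5 of the paper (Racah type, `d = 5`). The given numerical data
satisfy the conditions of the second main theorem with `θ i = θs i`, `β = 2`,
`γ = γ* = −12/35`, `θ_{-1} = θ*_{-1} = 3`, `θ*_6 = −21/5`, `a*_0 = 0`; consequently
the corresponding `6 × 6` tridiagonal/diagonal pair is a Leonard pair on `𝔽^6`,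
with the tridiagonal member multiplicity-free with eigenvalues `θs 0, …, θs 5`. -/
theorem racah_example {F : Type*} [Field F] [CharZero F] :
    let θs : ℤ → F := fun i =>
      if i = -1 then 3 else if i = 0 then 3 else if i = 1 then 93 / 35
      else if i = 2 then 69 / 35 else if i = 3 then 33 / 35 else if i = 4 then -3 / 7
      else if i = 5 then -15 / 7 else -21 / 5
    let aseq : ℕ → F := fun i =>
      if i = 0 then 0 else if i = 1 then 6 / 35 else if i = 2 then 18 / 35
      else if i = 3 then 36 / 35 else if i = 4 then 12 / 7 else 18 / 7
    let bseq : ℕ → F := fun i =>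
      if i = 0 then 3 else if i = 1 then 64 / 35 else if i = 2 then 243 / 175
      else if i = 3 then 48 / 49 else if i = 4 then 11 / 21 else 0
    let cseq : ℕ → F := fun i =>
      if i = 1 then 1 else if i = 2 then 192 / 175 else if i = 3 then 243 / 245
      else if i = 4 then 16 / 21 else if i = 5 then 3 / 7 else 0
    (∃ Ω : F, Thm2Conds 5 θs θs aseq bseq cseq 2 (-12 / 35) (-12 / 35) 0 Ω) ∧
    θs (-1) = 3 ∧ θs 6 = -21 / 5 ∧
    IsIrredTridiag (triMat 5 aseq bseq cseq) ∧
    IsLeonardPair 5 (Matrix.toLin' (triMat 5 aseq bseq cseq))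
      (Matrix.toLin' (Matrix.diagonal fun i : Fin 6 => θs ((i : ℕ) : ℤ))) ∧
    ∃ E : Fin 6 → Module.End F (Fin 6 → F),
      IdempSysOf 5 (Matrix.toLin' (triMat 5 aseq bseq cseq))
        (fun i : Fin 6 => θs ((i : ℕ) : ℤ)) E := by
  intro θs aseq bseq cseq
  have hinj : ∀ i j : ℤ, 0 ≤ i → i ≤ 5 → 0 ≤ j → j ≤ 5 → i ≠ j → θs i ≠ θs j := by
    intro i j h1 h2 h3 h4 h5
    interval_cases i <;> interval_cases j <;> first | exact absurd rfl h5 | norm_num [θs]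
  have hirr : IsIrredTridiag (triMat 5 aseq bseq cseq) := by
    constructor
    · intro i j h
      have h1 : (i : ℕ) ≠ j := by omega
      have h2 : (i : ℕ) + 1 ≠ j := by omega
      have h3 : (j : ℕ) + 1 ≠ i := by omega
      simp [triMat, h1, h2, h3]
    · intro i j h
      fin_cases i <;> fin_cases j <;> first | (exfalso; revert h; decide) |
        norm_num [triMat, aseq, bseq, cseq]
  have hAe : triMat 5 aseq bseq cseq = explA F := by
    ext i j
    fin_cases i <;> fin_cases j <;> simp [triMat, explA, aseq, bseq, cseq]
  have hTe : (fun i : Fin 6 => θs ((i : ℕ) : ℤ)) = explT F := by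
    ext i
    fin_cases i <;> simp [explT, θs]
  refine ⟨⟨0, ?_⟩, ?_, ?_, hirr, ?_⟩
  · refine ⟨?_, ?_, ?_, ?_, ?_, ?_, ?_, ?_, ?_, ?_, ?_⟩
    · exact_mod_cast hinj
    · intro i h1 h2
      exact hinj i 0 (by omega) (by exact_mod_cast h2) le_rfl (by norm_num) (by omega)
    · intro i h1 h2
      push_cast at h2
      interval_cases i <;> norm_num [θs]
    · intro i h1 h2
      interval_cases i <;> norm_num [bseq, cseq]
    · norm_num [bseq]
    · norm_num [cseq]
    · intro i h2
      interval_cases i <;> norm_num [aseq, bseq, cseq, θs]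
    · intro i h2
      interval_cases i <;> norm_num [bseq, cseq, θs]
    · intro i h1 h2
      interval_cases i <;> norm_num [bseq, cseq, θs]
    · norm_num [θs]
    · intro i h1 h2
      have h3 : i ≤ 4 := by push_cast at h2; omega
      clear h2
      interval_cases i <;> norm_num [θs]
  · norm_num [θs]
  · norm_num [θs]
  · apply leonard_of_matrix _ (transP F) ((1 / 36 : F) • transP F) _ _ transP_sq _ _ hirr
    · intro i j h
      by_contra hne
      exact hinj i j (by omega) (by omega) (by omega) (by omega)
        (by intro h; apply hne; ext; exact_mod_cast h) h
    · rw [hAe, hTe]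
      exact explA_mul
    · rw [hAe, hTe]
      exact mul_explA

end LeonardPaper
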